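/- Let p > 0, σ_x > 0, σ_n > 0, K, M ∈ ℕ, S ∈ ℝ^{M×K}. Let x be a random vector in ℝ^K with i.i.d. entries N(0, σ_x²) and n a random vector in ℝ^M with i.i.d. entries N(0, σ_n²), independent of x. Set C = E[φ_p(x)φ_p(x)ᵀ], 𝐌 = E[vec(φ_p(x)φ_p(x)ᵀ) vec(φ_p(x)φ_p(x)ᵀ)ᵀ], and N = E[vec(n nᵀ) vec(n nᵀ)ᵀ]. Then the mean squared error of the energy-detector estimate satisfies E[ ( Σ_{k=1}^K |x_k|^p − ‖S φ_p(x) + n‖₂² )² ] = tr{𝐌(SᵀS ⊗ SᵀS)} − 2 tr{𝐌(I_K ⊗ SᵀS)} + tr{𝐌} + 4σ_n² tr{C SᵀS} + tr{N} − 2 M σ_n² tr{C(I_K − SᵀS)}. -/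

import Mathlib

open Matrix MeasureTheory ProbabilityTheory
open scoped Kronecker

/-- Pre-processing map `φ_p : ℝ^K → ℝ^K`, `(φ_p x)_k = |x_k|^(p/2)`. -/
noncomputable def phi (p : ℝ) {K : ℕ} (x : Fin K → ℝ) : Fin K → ℝ :=
  fun k => |x k| ^ (p / 2)

/-- Column-major vectorization of a square matrix: `vec(A)(j,i) = A i j`. -/
def vecc {K : ℕ} (A : Matrix (Fin K) (Fin K) ℝ) : Fin K × Fin K → ℝ :=
  fun q => A q.2 q.1

/-- Law of a random vector in `ℝ^K` with i.i.d. entries `N(0, σ²)`. -/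
noncomputable def gaussPi (K : ℕ) (σ : ℝ) : Measure (Fin K → ℝ) :=
  Measure.pi fun _ => gaussianReal 0 (σ ^ 2).toNNReal

/-- Joint law of independent `x` (i.i.d. `N(0,σx²)` entries) and `n` (i.i.d. `N(0,σn²)` entries). -/
noncomputable def jointMeas (K M : ℕ) (σx σn : ℝ) :
    Measure ((Fin K → ℝ) × (Fin M → ℝ)) :=
  (gaussPi K σx).prod (gaussPi M σn)

/-- Second-moment matrix `C = E[φ_p(x) φ_p(x)ᵀ]`. -/
noncomputable def Cmat (p σ : ℝ) (K : ℕ) : Matrix (Fin K) (Fin K) ℝ :=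
  Matrix.of fun i j => ∫ x, phi p x i * phi p x j ∂(gaussPi K σ)

/-- Fourth-moment matrix `𝐌 = E[vec(φ_p(x)φ_p(x)ᵀ) vec(φ_p(x)φ_p(x)ᵀ)ᵀ]`. -/
noncomputable def Mmat (p σ : ℝ) (K : ℕ) : Matrix (Fin K × Fin K) (Fin K × Fin K) ℝ :=
  Matrix.of fun q r =>
    ∫ x, vecc (vecMulVec (phi p x) (phi p x)) q * vecc (vecMulVec (phi p x) (phi p x)) r
      ∂(gaussPi K σ)

/-- Noise fourth-moment matrix `N = E[vec(n nᵀ) vec(n nᵀ)ᵀ]`. -/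
noncomputable def Nmat (σ : ℝ) (M : ℕ) : Matrix (Fin M × Fin M) (Fin M × Fin M) ℝ :=
  Matrix.of fun q r =>
    ∫ n, vecc (vecMulVec n n) q * vecc (vecMulVec n n) r ∂(gaussPi M σ)

/-- All finite moments exist. -/
def ALp {Ω : Type*} [MeasurableSpace Ω] (μ : Measure Ω) (f : Ω → ℝ) : Prop :=
  ∀ q : NNReal, MemLp f q μ

section ALpLemmas

variable {Ω : Type*} [MeasurableSpace Ω] {μ : Measure Ω}

theorem ALp.int {f : Ω → ℝ} (hf : ALp μ f) : Integrable f μ := by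
  have := hf 1
  simpa [memLp_one_iff_integrable] using this

theorem ALp.mul {f g : Ω → ℝ} (hf : ALp μ f) (hg : ALp μ g) :
    ALp μ (fun x => f x * g x) := by
  intro q
  have : ENNReal.HolderTriple ((2 * q : NNReal) : ENNReal) ((2 * q : NNReal) : ENNReal) q := by
    constructor
    push_cast
    rw [ENNReal.mul_inv (by simp) (by simp), ← add_mul, ENNReal.inv_two_add_inv_two, one_mul]
  exact MemLp.mul' (hg (2 * q)) (hf (2 * q))

theorem ALp.add {f g : Ω → ℝ} (hf : ALp μ f) (hg : ALp μ g) :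
    ALp μ (fun x => f x + g x) := fun q => (hf q).add (hg q)

theorem ALp.sub {f g : Ω → ℝ} (hf : ALp μ f) (hg : ALp μ g) :
    ALp μ (fun x => f x - g x) := fun q => (hf q).sub (hg q)

theorem ALp.cmul {f : Ω → ℝ} (c : ℝ) (hf : ALp μ f) :
    ALp μ (fun x => c * f x) := fun q => (hf q).const_mul c

theorem ALp.mulc {f : Ω → ℝ} (hf : ALp μ f) (c : ℝ) :
    ALp μ (fun x => f x * c) := fun q => (hf q).mul_const c

theorem ALp.sum {ι : Type*} (s : Finset ι) {f : ι → Ω → ℝ} (hf : ∀ i, ALp μ (f i)) :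
    ALp μ (fun x => ∑ i ∈ s, f i x) := fun q => memLp_finsetSum s (fun i _ => hf i q)

theorem ALp.comp {Ω' : Type*} [MeasurableSpace Ω'] {ν : Measure Ω'} {f : Ω → ℝ} {g : Ω' → Ω}
    (hf : ALp μ f) (hg : MeasurePreserving g ν μ) :
    ALp ν (fun x => f (g x)) := fun q => (hf q).comp_measurePreserving hg

theorem ALp.abs_rpow {f : Ω → ℝ} (hf : ALp μ f) {r : ℝ} (hr : 0 < r) :
    ALp μ (fun x => |f x| ^ r) := by
  intro q
  have h := (hf (q * r.toNNReal)).norm_rpow_div (r.toNNReal : ENNReal)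
  have e : ((q * r.toNNReal : NNReal) : ENNReal) / (r.toNNReal : ENNReal) = q := by
    push_cast
    apply ENNReal.mul_div_cancel_right <;> simp [hr]
  rw [e] at h
  simpa [hr.le] using h

end ALpLemmas

instance gaussPi_prob (K : ℕ) (σ : ℝ) : IsProbabilityMeasure (gaussPi K σ) := by
  unfold gaussPi; infer_instance

theorem eval_mp (K : ℕ) (σ : ℝ) (k : Fin K) :
    MeasurePreserving (fun x : Fin K → ℝ => x k) (gaussPi K σ)
      (gaussianReal 0 (σ ^ 2).toNNReal) :=
  measurePreserving_eval (fun _ : Fin K => gaussianReal 0 (σ ^ 2).toNNReal) k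

theorem ALp_coord (K : ℕ) (σ : ℝ) (k : Fin K) : ALp (gaussPi K σ) (fun x => x k) := by
  have h : ALp (gaussianReal 0 (σ ^ 2).toNNReal) (fun x => x) := fun q => memLp_id_gaussianReal q
  exact h.comp (eval_mp K σ k)

theorem ALp_phi (p : ℝ) (hp : 0 < p) (K : ℕ) (σ : ℝ) (k : Fin K) :
    ALp (gaussPi K σ) (fun x => phi p x k) :=
  (ALp_coord K σ k).abs_rpow (by positivity)

theorem gauss_odd (K : ℕ) (σ : ℝ) (f : (Fin K → ℝ) → ℝ) (hf : ∀ x, f (-x) = - f x) :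
    ∫ x, f x ∂(gaussPi K σ) = 0 := by
  have i1 : (gaussianReal 0 (σ ^ 2).toNNReal).IsNegInvariant := by
    constructor
    have := gaussianReal_map_neg (μ := 0) (v := (σ ^ 2).toNNReal)
    rw [neg_zero] at this
    exact this
  have i2 : (gaussPi K σ).IsNegInvariant := by
    unfold gaussPi; infer_instance
  have h := integral_neg_eq_self f (gaussPi K σ)
  simp only [hf, integral_neg] at h
  linarith

theorem gauss_second (K : ℕ) (σ : ℝ) (i j : Fin K) :
    ∫ x, x i * x j ∂(gaussPi K σ) = if i = j then σ ^ 2 else 0 := by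
  split_ifs with h
  · subst h
    have h1 := (eval_mp K σ i).map_eq
    have h2 : ∫ y, y * y ∂(gaussianReal 0 (σ ^ 2).toNNReal) = σ ^ 2 := by
      have hv := variance_id_gaussianReal (μ := 0) (v := (σ ^ 2).toNNReal)
      rw [variance_of_integral_eq_zero (by fun_prop) (by simp)] at hv
      simp only [id] at hv
      simp_rw [← sq]
      rw [hv]
      simp [sq_nonneg]
    rw [← h2, ← h1, integral_map (measurable_pi_apply i).aemeasurable (by fun_prop)]
  · have hi : iIndepFun (fun (i : Fin K) (x : Fin K → ℝ) => x i) (gaussPi K σ) :=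
      iIndepFun_pi (X := fun _ : Fin K => (id : ℝ → ℝ)) (fun _ => aemeasurable_id)
    have := (hi.indepFun h).integral_fun_mul_eq_mul_integral
      (measurable_pi_apply i).aestronglyMeasurable (measurable_pi_apply j).aestronglyMeasurable
    rw [this, gauss_odd K σ (fun x => x i) (by simp), zero_mul]

theorem Mtrace (p σ : ℝ) (hp : 0 < p) (K : ℕ)
    (B : Matrix (Fin K × Fin K) (Fin K × Fin K) ℝ) :
    (Mmat p σ K * B).trace = ∫ x, ∑ q, ∑ r,
      vecc (vecMulVec (phi p x) (phi p x)) q * vecc (vecMulVec (phi p x) (phi p x)) r * B r q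
      ∂(gaussPi K σ) := by
  have hv : ∀ q, ALp (gaussPi K σ) (fun x => vecc (vecMulVec (phi p x) (phi p x)) q) :=
    fun q => (ALp_phi p hp K σ q.2).mul (ALp_phi p hp K σ q.1)
  rw [integral_finsetSum _ fun q _ =>
    (ALp.sum _ fun r => ((hv q).mul (hv r)).mulc (B r q)).int]
  refine Finset.sum_congr rfl fun q _ => ?_
  rw [integral_finsetSum _ fun r _ => (((hv q).mul (hv r)).mulc (B r q)).int]
  refine Finset.sum_congr rfl fun r _ => ?_
  rw [integral_mul_const]
  rfl

theorem Ctrace (p σ : ℝ) (hp : 0 < p) (K : ℕ) (B : Matrix (Fin K) (Fin K) ℝ) :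
    (Cmat p σ K * B).trace = ∫ x, ∑ q, ∑ r, phi p x q * phi p x r * B r q ∂(gaussPi K σ) := by
  have hv := ALp_phi p hp K σ
  simp only [Matrix.trace, Matrix.diag, Matrix.mul_apply]
  rw [integral_finsetSum _ fun q _ =>
    (ALp.sum _ fun r => ((hv q).mul (hv r)).mulc (B r q)).int]
  refine Finset.sum_congr rfl fun q _ => ?_
  rw [integral_finsetSum _ fun r _ => (((hv q).mul (hv r)).mulc (B r q)).int]
  refine Finset.sum_congr rfl fun r _ => ?_
  rw [integral_mul_const]
  rfl

theorem Ntrace (σ : ℝ) (K : ℕ) :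
    (Nmat σ K).trace = ∫ x, (∑ i, x i ^ 2) ^ 2 ∂(gaussPi K σ) := by
  have hv : ∀ q, ALp (gaussPi K σ) (fun x => vecc (vecMulVec x x) q) :=
    fun q => (ALp_coord K σ q.2).mul (ALp_coord K σ q.1)
  have : ∀ x : Fin K → ℝ, (∑ i, x i ^ 2) ^ 2
      = ∑ q, vecc (vecMulVec x x) q * vecc (vecMulVec x x) q := by
    intro x
    rw [sq, Finset.sum_mul_sum, Fintype.sum_prod_type]
    refine Finset.sum_congr rfl fun i _ => Finset.sum_congr rfl fun j _ => ?_
    simp [vecc, vecMulVec_apply]; ring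
  simp_rw [this]
  rw [integral_finsetSum _ fun q _ => ((hv q).mul (hv q)).int]
  rfl

/-- quadratic form -/
def qf {K : ℕ} (G : Matrix (Fin K) (Fin K) ℝ) (v : Fin K → ℝ) : ℝ :=
  ∑ q, ∑ r, v q * v r * G r q

theorem kron_form {K : ℕ} (A B : Matrix (Fin K) (Fin K) ℝ) (v : Fin K → ℝ) :
    ∑ q, ∑ r, vecc (vecMulVec v v) q * vecc (vecMulVec v v) r * (A ⊗ₖ B) r q
      = qf A v * qf B v := by
  unfold qf
  rw [Finset.sum_mul_sum, Fintype.sum_prod_type]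
  refine Finset.sum_congr rfl fun i _ => Finset.sum_congr rfl fun j _ => ?_
  rw [Finset.sum_mul_sum, Fintype.sum_prod_type]
  refine Finset.sum_congr rfl fun k _ => Finset.sum_congr rfl fun l _ => ?_
  simp [vecc, vecMulVec_apply]; ring

theorem qf_one {K : ℕ} (v : Fin K → ℝ) : qf 1 v = ∑ k, v k ^ 2 := by
  simp [qf, Matrix.one_apply, sq]

theorem qf_sub {K : ℕ} (A B : Matrix (Fin K) (Fin K) ℝ) (v : Fin K → ℝ) :
    qf (A - B) v = qf A v - qf B v := by
  simp [qf, mul_sub]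

theorem qf_gram {K M : ℕ} (S : Matrix (Fin M) (Fin K) ℝ) (v : Fin K → ℝ) :
    qf (Sᵀ * S) v = ∑ m, (S *ᵥ v) m ^ 2 := by
  have e : ∀ m, (S *ᵥ v) m ^ 2 = ∑ q, ∑ r, v q * v r * (S m r * S m q) := by
    intro m
    simp only [Matrix.mulVec, dotProduct]
    rw [sq, Finset.sum_mul_sum]
    refine Finset.sum_congr rfl fun i _ => Finset.sum_congr rfl fun j _ => ?_
    ring
  simp only [qf, e, Matrix.mul_apply, Matrix.transpose_apply, Finset.mul_sum]
  rw [Finset.sum_comm (s := (Finset.univ : Finset (Fin M)))]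
  refine Finset.sum_congr rfl fun i _ => ?_
  rw [Finset.sum_comm (s := (Finset.univ : Finset (Fin M)))]

theorem ALp_qf (p σ : ℝ) (hp : 0 < p) (K : ℕ) (G : Matrix (Fin K) (Fin K) ℝ) :
    ALp (gaussPi K σ) (fun x => qf G (phi p x)) :=
  ALp.sum _ fun q => ALp.sum _ fun r =>
    ((ALp_phi p hp K σ q).mul (ALp_phi p hp K σ r)).mulc _

theorem ALp_lin (p σ : ℝ) (hp : 0 < p) (K M : ℕ) (S : Matrix (Fin M) (Fin K) ℝ) (m : Fin M) :
    ALp (gaussPi K σ) (fun x => (S *ᵥ phi p x) m) :=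
  ALp.sum Finset.univ fun q => (ALp_phi p hp K σ q).cmul (S m q)


/-- The mean squared error of the energy-detector estimate:
`E[(Σₖ|x_k|^p − ‖Sφ_p(x)+n‖₂²)²] = tr{𝐌(SᵀS⊗SᵀS)} − 2tr{𝐌(I⊗SᵀS)} + tr{𝐌}
  + 4σ_n² tr{C SᵀS} + tr{N} − 2Mσ_n² tr{C(I − SᵀS)}`. -/
theorem stmt11 (p σx σn : ℝ) (hp : 0 < p) (hσx : 0 < σx) (hσn : 0 < σn) (K M : ℕ)
    (S : Matrix (Fin M) (Fin K) ℝ) :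
    ∫ z, ((∑ k, |z.1 k| ^ p) - ∑ m, ((S *ᵥ phi p z.1 + z.2) m) ^ 2) ^ 2
        ∂(jointMeas K M σx σn)
      = (Mmat p σx K * ((Sᵀ * S) ⊗ₖ (Sᵀ * S))).trace
        - 2 * (Mmat p σx K * ((1 : Matrix (Fin K) (Fin K) ℝ) ⊗ₖ (Sᵀ * S))).trace
        + (Mmat p σx K).trace
        + 4 * σn ^ 2 * (Cmat p σx K * (Sᵀ * S)).trace
        + (Nmat σn M).trace
        - 2 * (M : ℝ) * σn ^ 2
            * (Cmat p σx K * ((1 : Matrix (Fin K) (Fin K) ℝ) - Sᵀ * S)).trace := by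
  set μ := gaussPi K σx with hμ
  set ν := gaussPi M σn with hν
  set G := Sᵀ * S with hG
  let A : (Fin K → ℝ) → ℝ := fun x => qf 1 (phi p x) - qf G (phi p x)
  let L : Fin M → (Fin K → ℝ) → ℝ := fun m x => (S *ᵥ phi p x) m
  let Q : (Fin M → ℝ) → ℝ := fun n => ∑ m, n m ^ 2
  have h1 : ALp μ (fun x => qf 1 (phi p x)) := ALp_qf p σx hp K 1
  have h2 : ALp μ (fun x => qf G (phi p x)) := ALp_qf p σx hp K G
  have hA : ALp μ A := h1.sub h2
  have hL : ∀ m, ALp μ (L m) := ALp_lin p σx hp K M S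
  have hn : ∀ m, ALp ν (fun n => n m) := ALp_coord M σn
  have hQ : ALp ν Q := ALp.sum _ fun m => by
    have := (hn m).mul (hn m)
    simpa only [sq] using this
  have key : ∀ {f : (Fin K → ℝ) → ℝ} {g : (Fin M → ℝ) → ℝ}, ALp μ f → ALp ν g →
      ALp (μ.prod ν) (fun z => f z.1 * g z.2) := fun hf hg =>
    (hf.comp measurePreserving_fst).mul (hg.comp measurePreserving_snd)
  have c1 : ALp ν (fun _ => (1 : ℝ)) := fun q => memLp_const 1
  have c2 : ALp μ (fun _ => (1 : ℝ)) := fun q => memLp_const 1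
  have t1 := key (hA.mul hA) c1
  have t2 : ∀ i j, ALp (μ.prod ν) (fun z => (L i z.1 * L j z.1) * (z.2 i * z.2 j)) :=
    fun i j => key ((hL i).mul (hL j)) ((hn i).mul (hn j))
  have t3 := key c2 (hQ.mul hQ)
  have t4 : ∀ i, ALp (μ.prod ν) (fun z => (A z.1 * L i z.1) * z.2 i) :=
    fun i => key (hA.mul (hL i)) (hn i)
  have t5 := key hA hQ
  have t6 : ∀ i, ALp (μ.prod ν) (fun z => L i z.1 * (z.2 i * Q z.2)) :=
    fun i => key (hL i) ((hn i).mul hQ)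
  have s2 := ALp.sum Finset.univ fun i => ALp.sum Finset.univ fun j => t2 i j
  have s4 := ALp.sum Finset.univ t4
  have s6 := ALp.sum Finset.univ t6
  have point : ∀ z : (Fin K → ℝ) × (Fin M → ℝ),
      ((∑ k, |z.1 k| ^ p) - ∑ m, ((S *ᵥ phi p z.1 + z.2) m) ^ 2) ^ 2
      = A z.1 * A z.1 * 1 + 4 * (∑ i, ∑ j, (L i z.1 * L j z.1) * (z.2 i * z.2 j))
        + 1 * (Q z.2 * Q z.2) - 4 * (∑ i, (A z.1 * L i z.1) * z.2 i)
        - 2 * (A z.1 * Q z.2) + 4 * (∑ i, L i z.1 * (z.2 i * Q z.2)) := by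
    intro z
    have e1 : ∑ k, |z.1 k| ^ p = qf 1 (phi p z.1) := by
      rw [qf_one]
      refine Finset.sum_congr rfl fun k _ => ?_
      rw [phi, ← Real.rpow_natCast, ← Real.rpow_mul (abs_nonneg _)]
      congr 1
      push_cast; ring
    set T := ∑ i, L i z.1 * z.2 i with hT
    have e2 : ∑ m, ((S *ᵥ phi p z.1 + z.2) m) ^ 2 = qf G (phi p z.1) + 2 * T + Q z.2 := by
      rw [hG, qf_gram, hT, Finset.mul_sum, ← Finset.sum_add_distrib, ← Finset.sum_add_distrib]
      refine Finset.sum_congr rfl fun m _ => ?_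
      simp only [Pi.add_apply, L]; ring
    have e3 : ∑ i, ∑ j, (L i z.1 * L j z.1) * (z.2 i * z.2 j) = T * T := by
      rw [hT, Finset.sum_mul_sum]
      refine Finset.sum_congr rfl fun i _ => Finset.sum_congr rfl fun j _ => ?_
      ring
    have e4 : ∑ i, (A z.1 * L i z.1) * z.2 i = A z.1 * T := by
      rw [hT, Finset.mul_sum]
      exact Finset.sum_congr rfl fun i _ => by ring
    have e6 : ∑ i, L i z.1 * (z.2 i * Q z.2) = T * Q z.2 := by
      rw [hT, Finset.sum_mul]
      exact Finset.sum_congr rfl fun i _ => by ring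
    rw [e1, e2, e3, e4, e6]
    simp only [A]; ring
  have i2 : ∫ z, ∑ i, ∑ j, (L i z.1 * L j z.1) * (z.2 i * z.2 j) ∂(μ.prod ν)
      = σn ^ 2 * ∫ x, qf G (phi p x) ∂μ := by
    rw [integral_finsetSum _ fun i _ => (ALp.sum Finset.univ fun j => t2 i j).int]
    simp_rw [integral_finsetSum Finset.univ fun j _ => (t2 _ j).int]
    have ij : ∀ i j, ∫ z, (L i z.1 * L j z.1) * (z.2 i * z.2 j) ∂(μ.prod ν)
        = (∫ x, L i x * L j x ∂μ) * if i = j then σn ^ 2 else 0 := by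
      intro i j
      rw [integral_prod_mul (fun x => L i x * L j x) (fun n : Fin M → ℝ => n i * n j), hν,
        gauss_second]
    simp_rw [ij]
    simp only [mul_ite, mul_zero, Finset.sum_ite_eq, Finset.mem_univ, if_true]
    simp_rw [hG, qf_gram, sq ((S *ᵥ _) _)]
    rw [integral_finsetSum _ fun i _ => ((hL i).mul (hL i)).int, ← Finset.sum_mul, mul_comm]
  have i4 : ∫ z, ∑ i, (A z.1 * L i z.1) * z.2 i ∂(μ.prod ν) = 0 := by
    rw [integral_finsetSum _ fun i _ => (t4 i).int]
    refine Finset.sum_eq_zero fun i _ => ?_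
    rw [integral_prod_mul (fun x => A x * L i x) (fun n : Fin M → ℝ => n i), hν,
      gauss_odd M σn (fun n => n i) (by simp), mul_zero]
  have i6 : ∫ z, ∑ i, L i z.1 * (z.2 i * Q z.2) ∂(μ.prod ν) = 0 := by
    rw [integral_finsetSum _ fun i _ => (t6 i).int]
    refine Finset.sum_eq_zero fun i _ => ?_
    rw [integral_prod_mul (fun x => L i x) (fun n : Fin M → ℝ => n i * Q n), hν,
      gauss_odd M σn (fun n => n i * Q n) (by simp [Q]), mul_zero]
  have iQ : ∫ n, Q n ∂ν = M * σn ^ 2 := by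
    simp only [Q, sq]
    rw [integral_finsetSum _ fun i _ => ((hn i).mul (hn i)).int]
    simp [hν, gauss_second, sq]
  have iA : ∫ x, A x ∂μ = (Cmat p σx K * (1 - G)).trace := by
    rw [Ctrace p σx hp]
    refine integral_congr_ae (Filter.Eventually.of_forall fun x => ?_)
    exact (qf_sub 1 G (phi p x)).symm
  have iG : ∫ x, qf G (phi p x) ∂μ = (Cmat p σx K * G).trace := by
    rw [Ctrace p σx hp]; rfl
  have iAA : ∫ x, A x * A x ∂μ = (Mmat p σx K * (G ⊗ₖ G)).trace
      - 2 * (Mmat p σx K * ((1 : Matrix (Fin K) (Fin K) ℝ) ⊗ₖ G)).trace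
      + (Mmat p σx K).trace := by
    have hM : (Mmat p σx K).trace
        = (Mmat p σx K * ((1 : Matrix (Fin K) (Fin K) ℝ) ⊗ₖ
          (1 : Matrix (Fin K) (Fin K) ℝ))).trace := by
      rw [Matrix.one_kronecker_one, mul_one]
    rw [hM, Mtrace p σx hp, Mtrace p σx hp, Mtrace p σx hp]
    simp_rw [kron_form]
    rw [← integral_const_mul, ← integral_sub (h2.mul h2).int ((h1.mul h2).cmul 2).int,
      ← integral_add ((h2.mul h2).sub ((h1.mul h2).cmul 2)).int (h1.mul h1).int]
    refine integral_congr_ae (Filter.Eventually.of_forall fun x => ?_)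
    simp only [A]; ring
  have iN : ∫ n, Q n * Q n ∂ν = (Nmat σn M).trace := by
    rw [Ntrace]
    simp only [Q, ← sq]
    rfl
  change ∫ z, _ ∂(μ.prod ν) = _
  simp_rw [point]
  have u1 := t1.add (s2.cmul 4)
  have u2 := u1.add t3
  have u3 := u2.sub (s4.cmul 4)
  have u4 := u3.sub (t5.cmul 2)
  rw [integral_add u4.int (s6.cmul 4).int, integral_sub u3.int (t5.cmul 2).int,
    integral_sub u2.int (s4.cmul 4).int, integral_add u1.int t3.int,
    integral_add t1.int (s2.cmul 4).int]
  simp only [integral_const_mul]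
  rw [i2, i4, i6, integral_prod_mul (fun x => A x * A x) (fun _ : Fin M → ℝ => (1 : ℝ)),
    integral_prod_mul A Q]
  simp only [one_mul]
  have i3 : ∫ z : (Fin K → ℝ) × (Fin M → ℝ), Q z.2 * Q z.2 ∂(μ.prod ν)
      = ∫ n, Q n * Q n ∂ν := by
    have := integral_prod_mul (μ := μ) (ν := ν) (fun _ => (1 : ℝ)) (fun n => Q n * Q n)
    simpa using this
  rw [i3, iN, iA, iQ, iAA, iG]
  simp
  ring
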